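/- Let q be a real number with 0 ≤ q < 1/2, and let t ≥ τ ≥ 0 be integers. Suppose matrices B_i ∈ ℝ^{d×r}, Q_i ∈ ℝ^{d×r}, and R_{i+1} ∈ ℝ^{r×r} for i = t−τ, …, t−1 satisfy: B_iᵀ B_i = I_r, B_iᵀ Q_i = 0, ‖Q_i‖_F ≤ q, R_{i+1} is upper triangular with positive diagonal entries, R_{i+1}ᵀ R_{i+1} = I_r + Q_iᵀ Q_i, and B_{i+1} = (B_i + Q_i) R_{i+1}^{−1}. Then ‖B_t − B_{t−τ}‖ ≤ 2 τ q + 4 τ q², where ‖·‖ denotes the spectral norm. -/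

import Mathlib

open Matrix BigOperators

/-- Frobenius norm of a real matrix. -/
noncomputable def frobNorm {m n : ℕ} (A : Matrix (Fin m) (Fin n) ℝ) : ℝ :=
  Real.sqrt (∑ i, ∑ j, (A i j) ^ 2)

/-- Spectral norm (largest singular value) of a real matrix. -/
noncomputable def specNorm {m n : ℕ} (A : Matrix (Fin m) (Fin n) ℝ) : ℝ :=
  ‖LinearMap.toContinuousLinearMap (Matrix.toEuclideanLin A)‖

/-!
For one step `B' = (B + Q) R⁻¹`, write `B' - B = (Q - B (R - 1)) R⁻¹`. The Gram identity
`Rᴴ R = 1 + Qᴴ Q` makes `R` expanding, so `‖R⁻¹‖ ≤ 1`. It also gives `R - R⁻ᴴ = R⁻ᴴ Qᴴ Q`, and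
because `R` and `R⁻¹` are upper triangular with positive diagonal, `R - 1` is dominated entry by
entry by `R - R⁻ᴴ`; hence `‖R - 1‖_F ≤ ‖Q‖_F²`. A step therefore moves `B` by at most `q + q²`, and
the steps are summed with the triangle inequality.
-/

section MatrixDrift

open Finset
open scoped ComplexOrder Matrix.Norms.L2Operator

/-- The Frobenius norm. It is named by a notation because the norm instance on matrices is the `L²`
operator norm, and the two have to be compared. -/
local notation "‖" A "‖_F" => @norm _ Matrix.frobeniusSeminormedAddCommGroup.toNorm A

section MatrixNorms

variable {𝕜 l m n : Type*} [RCLike 𝕜] [Fintype l] [Fintype m] [Fintype n]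

lemma frobenius_norm_sq (A : Matrix m n 𝕜) : ‖A‖_F ^ 2 = ∑ i, ∑ j, ‖A i j‖ ^ 2 := by
  simp only [frobenius_norm_def, Real.rpow_two, ← Real.sqrt_eq_rpow]
  exact Real.sq_sqrt (by positivity)

lemma frobenius_norm_nonneg (A : Matrix m n 𝕜) : 0 ≤ ‖A‖_F :=
  @norm_nonneg _ Matrix.frobeniusSeminormedAddCommGroup.toSeminormedAddGroup A

lemma frobenius_norm_le_of_forall_norm_le {A C : Matrix m n 𝕜} (h : ∀ i j, ‖A i j‖ ≤ ‖C i j‖) :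
    ‖A‖_F ≤ ‖C‖_F := by
  refine le_of_sq_le_sq ?_ (frobenius_norm_nonneg C)
  rw [frobenius_norm_sq, frobenius_norm_sq]
  gcongr with i _ j _
  exact h i j

lemma frobenius_norm_conjTranspose_mul_self_le (A : Matrix m n 𝕜) : ‖Aᴴ * A‖_F ≤ ‖A‖_F ^ 2 := by
  simpa only [frobenius_norm_conjTranspose, sq] using frobenius_norm_mul Aᴴ A

lemma star_dotProduct_self (v : n → 𝕜) : star v ⬝ᵥ v = (‖WithLp.toLp 2 v‖ ^ 2 : ℝ) := by
  rw [dotProduct_comm, ← EuclideanSpace.inner_toLp_toLp, inner_self_eq_norm_sq_to_K,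
    RCLike.ofReal_pow]

variable [DecidableEq n]

lemma l2_opNorm_le_frobenius_norm (A : Matrix m n 𝕜) : ‖A‖ ≤ ‖A‖_F := by
  refine ContinuousLinearMap.opNorm_le_bound _ (frobenius_norm_nonneg A) fun x ↦ ?_
  have h := frobenius_norm_mul A (replicateCol Unit x.ofLp)
  rwa [← replicateCol_mulVec, frobenius_norm_replicateCol, frobenius_norm_replicateCol] at h

lemma frobenius_norm_mul_le_l2_opNorm_mul (A : Matrix m n 𝕜) (C : Matrix n l 𝕜) :
    ‖A * C‖_F ≤ ‖A‖ * ‖C‖_F := by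
  refine le_of_sq_le_sq ?_ (mul_nonneg (norm_nonneg A) (frobenius_norm_nonneg C))
  have column_le (j : l) : ∑ i, ‖(A * C) i j‖ ^ 2 ≤ ‖A‖ ^ 2 * ∑ i, ‖C i j‖ ^ 2 := by
    have h := pow_le_pow_left₀ (norm_nonneg _) (l2_opNorm_mulVec A (WithLp.toLp 2 (C.col j))) 2
    rwa [mul_pow, EuclideanSpace.norm_sq_eq, EuclideanSpace.norm_sq_eq] at h
  calc ‖A * C‖_F ^ 2
    _ = ∑ j, ∑ i, ‖(A * C) i j‖ ^ 2 := by rw [frobenius_norm_sq, sum_comm]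
    _ ≤ ∑ j, ‖A‖ ^ 2 * ∑ i, ‖C i j‖ ^ 2 := sum_le_sum fun j _ ↦ column_le j
    _ = (‖A‖ * ‖C‖_F) ^ 2 := by rw [← mul_sum, sum_comm, ← frobenius_norm_sq, mul_pow]

lemma l2_opNorm_le_one_of_posSemidef {A : Matrix m n 𝕜} (h : (1 - Aᴴ * A).PosSemidef) :
    ‖A‖ ≤ 1 := by
  refine ContinuousLinearMap.opNorm_le_bound _ zero_le_one fun x ↦ ?_
  rw [one_mul]
  refine le_of_sq_le_sq ?_ (norm_nonneg x)
  have hx := h.dotProduct_mulVec_nonneg x.ofLp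
  rwa [Matrix.sub_mulVec, one_mulVec, dotProduct_sub, ← mulVec_mulVec, dotProduct_mulVec,
    ← star_mulVec, sub_nonneg, star_dotProduct_self, star_dotProduct_self,
    RCLike.ofReal_le_ofReal] at hx

lemma conjTranspose_inv_mul_gram_sub_one {α : Type*} [CommRing α] [StarRing α] {R : Matrix n n α}
    (hdet : IsUnit R.det) : R⁻¹ᴴ * (Rᴴ * R - 1) = R - R⁻¹ᴴ := by
  rw [Matrix.mul_sub, ← Matrix.mul_assoc, ← conjTranspose_mul, mul_nonsing_inv R hdet,
    conjTranspose_one, Matrix.one_mul, Matrix.mul_one]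

lemma l2_opNorm_inv_le_one {R : Matrix n n 𝕜} (h : (Rᴴ * R - 1).PosSemidef) : ‖R⁻¹‖ ≤ 1 := by
  have gram_posDef : (Rᴴ * R).PosDef := by simpa using PosDef.one.add_posSemidef h
  have hdet : IsUnit R.det :=
    isUnit_of_mul_isUnit_right (det_mul Rᴴ R ▸ (isUnit_iff_isUnit_det _).1 gram_posDef.isUnit)
  refine l2_opNorm_le_one_of_posSemidef ?_
  have congruence : R⁻¹ᴴ * (Rᴴ * R - 1) * R⁻¹ = 1 - R⁻¹ᴴ * R⁻¹ := by
    rw [conjTranspose_inv_mul_gram_sub_one hdet, Matrix.sub_mul, mul_nonsing_inv R hdet]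
  exact congruence ▸ h.conjTranspose_mul_mul_same R⁻¹

end MatrixNorms

section UpperTriangular

variable {n : Type*} [Fintype n] [LinearOrder n]

lemma diag_mul_of_isUpperTriangular {α : Type*} [NonUnitalNonAssocSemiring α] {M N : Matrix n n α}
    (hM : M.IsUpperTriangular) (hN : N.IsUpperTriangular) (i : n) :
    (M * N) i i = M i i * N i i := by
  rw [mul_apply]
  refine Fintype.sum_eq_single i fun k hk ↦ ?_
  rcases hk.lt_or_gt with hki | hik
  · rw [hM hki, zero_mul]
  · rw [hN hik, mul_zero]

lemma isUnit_det_of_isUpperTriangular {K : Type*} [Field K] {R : Matrix n n K}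
    (hR : R.IsUpperTriangular) (hdiag : ∀ i, R i i ≠ 0) : IsUnit R.det := by
  rw [det_of_isUpperTriangular hR]
  exact (prod_ne_zero_iff.2 fun i _ ↦ hdiag i).isUnit

lemma isUpperTriangular_inv {K : Type*} [Field K] {R : Matrix n n K}
    (hR : R.IsUpperTriangular) (hdiag : ∀ i, R i i ≠ 0) : R⁻¹.IsUpperTriangular := by
  have := invertibleOfIsUnitDet R (isUnit_det_of_isUpperTriangular hR hdiag)
  exact blockTriangular_inv_of_blockTriangular hR

lemma inv_apply_self_of_isUpperTriangular {K : Type*} [Field K] {R : Matrix n n K}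
    (hR : R.IsUpperTriangular) (hdiag : ∀ i, R i i ≠ 0) (i : n) : R⁻¹ i i = (R i i)⁻¹ := by
  refine eq_inv_of_mul_eq_one_left ?_
  rw [← diag_mul_of_isUpperTriangular (isUpperTriangular_inv hR hdiag) hR,
    nonsing_inv_mul R (isUnit_det_of_isUpperTriangular hR hdiag), one_apply_eq]

variable {𝕜 : Type*} [RCLike 𝕜]

lemma norm_sub_one_le_norm_sub_inv {z : 𝕜} (hz : 0 < z) : ‖z - 1‖ ≤ ‖z - z⁻¹‖ := by
  have factor : z - z⁻¹ = (z - 1) * (1 + z⁻¹) := by field_simp [hz.ne']; ring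
  have re_inv_nonneg : 0 ≤ RCLike.re z⁻¹ := (RCLike.pos_iff.1 (RCLike.inv_pos_of_pos hz)).1.le
  have one_le : 1 ≤ ‖1 + z⁻¹‖ := calc
    1 ≤ RCLike.re (1 + z⁻¹) := by simpa only [map_add, RCLike.one_re, le_add_iff_nonneg_right]
    _ ≤ ‖1 + z⁻¹‖ := RCLike.re_le_norm _
  rw [factor, norm_mul]
  exact le_mul_of_one_le_right (norm_nonneg _) one_le

lemma norm_sub_one_apply_le {R : Matrix n n 𝕜} (hR : R.IsUpperTriangular) (hpos : ∀ i, 0 < R i i)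
    (i j : n) : ‖(R - 1) i j‖ ≤ ‖(R - R⁻¹ᴴ) i j‖ := by
  have hdiag (k : n) : R k k ≠ 0 := (hpos k).ne'
  simp only [Matrix.sub_apply, conjTranspose_apply]
  rcases lt_trichotomy i j with hij | rfl | hji
  · rw [one_apply_ne hij.ne, isUpperTriangular_inv hR hdiag hij, star_zero]
  · rw [one_apply_eq, inv_apply_self_of_isUpperTriangular hR hdiag,
      (RCLike.inv_pos_of_pos (hpos i)).le.isSelfAdjoint.star_eq]
    exact norm_sub_one_le_norm_sub_inv (hpos i)
  · rw [hR hji, one_apply_ne hji.ne', sub_zero, norm_zero]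
    exact norm_nonneg _

lemma frobenius_norm_sub_one_le {R : Matrix n n 𝕜} (hR : R.IsUpperTriangular)
    (hpos : ∀ i, 0 < R i i) : ‖R - 1‖_F ≤ ‖R⁻¹‖ * ‖Rᴴ * R - 1‖_F := by
  have hdet := isUnit_det_of_isUpperTriangular hR fun i ↦ (hpos i).ne'
  calc ‖R - 1‖_F
    _ ≤ ‖R - R⁻¹ᴴ‖_F := frobenius_norm_le_of_forall_norm_le (norm_sub_one_apply_le hR hpos)
    _ = ‖R⁻¹ᴴ * (Rᴴ * R - 1)‖_F := by rw [conjTranspose_inv_mul_gram_sub_one hdet]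
    _ ≤ ‖R⁻¹‖ * ‖Rᴴ * R - 1‖_F := by
      rw [← l2_opNorm_conjTranspose R⁻¹]
      exact frobenius_norm_mul_le_l2_opNorm_mul _ _

end UpperTriangular

section QRStep

variable {𝕜 m n : Type*} [RCLike 𝕜] [Fintype m] [Fintype n] [LinearOrder n]

lemma l2_opNorm_qr_step_sub_le {B Q : Matrix m n 𝕜} {R : Matrix n n 𝕜} (hB : Bᴴ * B = 1)
    (hR : R.IsUpperTriangular) (hpos : ∀ j, 0 < R j j) (hgram : Rᴴ * R = 1 + Qᴴ * Q) :
    ‖(B + Q) * R⁻¹ - B‖ ≤ ‖Q‖_F + ‖Q‖_F ^ 2 := by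
  have hdet := isUnit_det_of_isUpperTriangular hR fun j ↦ (hpos j).ne'
  have gram_sub_one : Rᴴ * R - 1 = Qᴴ * Q := by rw [hgram, add_sub_cancel_left]
  have norm_B : ‖B‖ ≤ 1 := l2_opNorm_le_one_of_posSemidef (by simp [hB, PosSemidef.zero])
  have norm_R_inv : ‖R⁻¹‖ ≤ 1 :=
    l2_opNorm_inv_le_one (gram_sub_one ▸ posSemidef_conjTranspose_mul_self Q)
  have norm_R_sub_one : ‖R - 1‖ ≤ ‖Q‖_F ^ 2 := calc
    ‖R - 1‖ ≤ ‖R - 1‖_F := l2_opNorm_le_frobenius_norm _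
    _ ≤ ‖R⁻¹‖ * ‖Qᴴ * Q‖_F := gram_sub_one ▸ frobenius_norm_sub_one_le hR hpos
    _ ≤ ‖Qᴴ * Q‖_F := mul_le_of_le_one_left (frobenius_norm_nonneg _) norm_R_inv
    _ ≤ ‖Q‖_F ^ 2 := frobenius_norm_conjTranspose_mul_self_le Q
  calc ‖(B + Q) * R⁻¹ - B‖
    _ = ‖(Q - B * (R - 1)) * R⁻¹‖ := by
      congr 1
      rw [Matrix.mul_sub, Matrix.mul_one, sub_sub_eq_add_sub, Matrix.sub_mul,
        mul_nonsing_inv_cancel_right _ _ hdet, add_comm]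
    _ ≤ ‖Q - B * (R - 1)‖ * ‖R⁻¹‖ := l2_opNorm_mul _ _
    _ ≤ ‖Q - B * (R - 1)‖ := mul_le_of_le_one_right (norm_nonneg _) norm_R_inv
    _ ≤ ‖Q‖ + ‖B‖ * ‖R - 1‖ := (norm_sub_le _ _).trans (by gcongr; exact l2_opNorm_mul _ _)
    _ ≤ ‖Q‖ + ‖R - 1‖ := by gcongr; exact mul_le_of_le_one_left (norm_nonneg _) norm_B
    _ ≤ ‖Q‖_F + ‖Q‖_F ^ 2 := add_le_add (l2_opNorm_le_frobenius_norm Q) norm_R_sub_one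

theorem subspace_iterates_drift_general {q : ℝ} {s t : ℕ} (hst : s ≤ t)
    {B Q : ℕ → Matrix m n 𝕜} {R : ℕ → Matrix n n 𝕜}
    (hstep : ∀ i, s ≤ i → i < t →
      (B i)ᴴ * B i = 1
      ∧ ‖Q i‖_F ≤ q
      ∧ (R (i + 1)).IsUpperTriangular
      ∧ (∀ j, 0 < R (i + 1) j j)
      ∧ (R (i + 1))ᴴ * R (i + 1) = 1 + (Q i)ᴴ * Q i
      ∧ B (i + 1) = (B i + Q i) * (R (i + 1))⁻¹) :
    ‖B t - B s‖ ≤ (t - s : ℕ) * (q + q ^ 2) := by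
  have step_le {i : ℕ} (hsi : s ≤ i) (hit : i < t) : dist (B i) (B (i + 1)) ≤ q + q ^ 2 := by
    obtain ⟨hB, hQ, hR, hpos, hgram, hB'⟩ := hstep i hsi hit
    rw [dist_eq_norm', hB']
    have hQ_nonneg := frobenius_norm_nonneg (Q i)
    exact (l2_opNorm_qr_step_sub_le hB hR hpos hgram).trans (by gcongr)
  calc ‖B t - B s‖
    _ = dist (B s) (B t) := (dist_eq_norm' _ _).symm
    _ ≤ ∑ _i ∈ Ico s t, (q + q ^ 2) := dist_le_Ico_sum_of_dist_le hst step_le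
    _ = (t - s : ℕ) * (q + q ^ 2) := by rw [sum_const, Nat.card_Ico, nsmul_eq_mul]

end QRStep

lemma specNorm_eq_l2_opNorm {m n : ℕ} (A : Matrix (Fin m) (Fin n) ℝ) : specNorm A = ‖A‖ := rfl

lemma frobNorm_eq_frobenius_norm {m n : ℕ} (A : Matrix (Fin m) (Fin n) ℝ) : frobNorm A = ‖A‖_F := by
  simp [frobNorm, frobenius_norm_def, Real.sqrt_eq_rpow]

end MatrixDrift

/-- Drift bound for the QR-orthonormalized subspace iterates:
‖B_t − B_{t−τ}‖ ≤ 2τq + 4τq². -/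
theorem subspace_iterates_drift
    (d r : ℕ) (q : ℝ) (hq0 : 0 ≤ q) (hq : q < 1 / 2)
    (t τ : ℕ) (hτt : τ ≤ t)
    (B Q : ℕ → Matrix (Fin d) (Fin r) ℝ)
    (R : ℕ → Matrix (Fin r) (Fin r) ℝ)
    (hcond : ∀ i, t - τ ≤ i → i < t →
      (B i)ᵀ * B i = 1
      ∧ (B i)ᵀ * Q i = 0
      ∧ frobNorm (Q i) ≤ q
      ∧ (R (i + 1)).BlockTriangular id
      ∧ (∀ j, 0 < R (i + 1) j j)
      ∧ (R (i + 1))ᵀ * R (i + 1) = 1 + (Q i)ᵀ * Q i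
      ∧ B (i + 1) = (B i + Q i) * (R (i + 1))⁻¹) :
    specNorm (B t - B (t - τ)) ≤ 2 * τ * q + 4 * τ * q ^ 2 := by
  have drift : specNorm (B t - B (t - τ)) ≤ τ * (q + q ^ 2) := by
    simp only [frobNorm_eq_frobenius_norm, ← conjTranspose_eq_transpose_of_trivial] at hcond
    simpa only [Nat.sub_sub_self hτt, specNorm_eq_l2_opNorm] using
      subspace_iterates_drift_general (t.sub_le τ) fun i hsi hit ↦
        let ⟨hB, _, hstep⟩ := hcond i hsi hit
        ⟨hB, hstep⟩
  have hτq : 0 ≤ τ * q + 3 * τ * q ^ 2 := by positivity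
  linarith
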